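/- Let T > 0, let q : ℝ → ℝ be T-periodic and locally integrable satisfying (q*), and let g ∈ C¹([0,∞)) satisfy (g*) together with g(s)/s → +∞ as s → +∞. Then for every r > 0 there exist a constant R > r, a nonnegative T-periodic locally integrable function v with v not identically zero (a.e.), and a constant ν₀ > 0, such that: (i) for every ν ∈ [0, ν₀], every nonnegative T-periodic solution u of u'' + q(t) g(u) + ν v(t) = 0 satisfies sup over t of |u(t)| ≠ R; and (ii) for ν = ν₀ there is no T-periodic solution u of u'' + q(t) g(u) + ν v(t) = 0 with 0 ≤ u(t) ≤ R for all t ∈ ℝ. -/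

import Mathlib

open MeasureTheory Set Filter

/-- `u` is a solution of `u'' + F(t,u) = 0`: `u` is of class `C¹` and its derivative `u'`
is locally absolutely continuous (it is the integral of a locally integrable function),
with `u'' + F(t, u(t)) = 0` for a.e. `t`. -/
def IsSol (F : ℝ → ℝ → ℝ) (u : ℝ → ℝ) : Prop :=
  ∃ u' : ℝ → ℝ,
    (∀ t, HasDerivAt u (u' t) t) ∧
    MeasureTheory.LocallyIntegrable (fun s => F s (u s)) MeasureTheory.volume ∧
    ∀ t, u' t = u' 0 - ∫ s in (0:ℝ)..t, F s (u s)

/-- `q ≻ 0` on `I` : `q ≥ 0` a.e. on `I` and `q ≢ 0` on `I`. -/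
def PosOn (q : ℝ → ℝ) (I : Set ℝ) : Prop :=
  (∀ᵐ t ∂(MeasureTheory.volume.restrict I), 0 ≤ q t) ∧
  ¬ (∀ᵐ t ∂(MeasureTheory.volume.restrict I), q t = 0)

/-- Condition `(q*)`: `[0,T]` splits into `m` closed intervals where `q ≻ 0`
separated by `m` closed intervals where `q ≺ 0`. -/
def SignCond (q : ℝ → ℝ) (T : ℝ) (m : ℕ) : Prop :=
  ∃ σ : ℕ → ℝ, σ 0 = 0 ∧ σ (2*m) = T ∧ (∀ i < 2*m, σ i < σ (i+1)) ∧
    (∀ i < m, PosOn q (Set.Icc (σ (2*i)) (σ (2*i+1)))) ∧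
    (∀ i < m, PosOn (fun t => - q t) (Set.Icc (σ (2*i+1)) (σ (2*i+2))))

/-- A subharmonic solution of order `k`: `kT`-periodic but not `ℓT`-periodic
for `ℓ = 1, …, k-1`. -/
def IsSubharmonic (u : ℝ → ℝ) (T : ℝ) (k : ℕ) : Prop :=
  Function.Periodic u (k * T) ∧ ∀ ℓ : ℕ, 1 ≤ ℓ → ℓ < k → ¬ Function.Periodic u (ℓ * T)

/-- `u` and `v` belong to the same periodicity class. -/
def SameClass (u v : ℝ → ℝ) (T : ℝ) : Prop :=
  ∃ ℓ : ℤ, ∀ t, v t = u (t + ℓ * T)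

theorem aux_ii {f : ℝ → ℝ} (hf : LocallyIntegrable f volume) {a b : ℝ} :
    IntervalIntegrable f volume a b :=
  (hf.integrableOn_isCompact isCompact_uIcc).intervalIntegrable

theorem aux_eps {q : ℝ → ℝ} {a b : ℝ} (hab : a < b) (hq : LocallyIntegrable q volume)
    (h : PosOn q (Icc a b)) :
    ∃ ε > 0, a + ε < b - ε ∧ 0 < ∫ s in (a+ε)..(b-ε), q s := by
  obtain ⟨h1, h2⟩ := h
  have hint : ∀ x y : ℝ, IntervalIntegrable q volume x y := fun x y => aux_ii hq
  have hpos : 0 < ∫ s in a..b, q s := by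
    have h0 : 0 ≤ ∫ s in a..b, q s := by
      apply intervalIntegral.integral_nonneg_of_ae_restrict hab.le
      exact h1
    rcases h0.lt_or_eq with h0 | h0
    · exact h0
    · exfalso
      apply h2
      rw [← MeasureTheory.restrict_Ioc_eq_restrict_Icc] at h1 ⊢
      exact (intervalIntegral.integral_eq_zero_iff_of_le_of_nonneg_ae hab.le h1 (hint a b)).1 h0.symm
  have hc : Continuous (fun ε : ℝ => ∫ s in (a+ε)..(b-ε), q s) := by
    have hF : Continuous (fun t : ℝ => ∫ s in (0:ℝ)..t, q s) :=
      intervalIntegral.continuous_primitive hint 0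
    have : (fun ε : ℝ => ∫ s in (a+ε)..(b-ε), q s) =
        fun ε => (∫ s in (0:ℝ)..(b-ε), q s) - ∫ s in (0:ℝ)..(a+ε), q s := by
      funext ε
      rw [intervalIntegral.integral_interval_sub_left (hint _ _) (hint _ _)]
    rw [this]
    exact (hF.comp (by fun_prop : Continuous fun ε : ℝ => b - ε)).sub
      (hF.comp (by fun_prop : Continuous fun ε : ℝ => a + ε))
  have he : ∀ᶠ ε in nhds (0:ℝ), 0 < ∫ s in (a+ε)..(b-ε), q s := by
    apply hc.continuousAt.eventually_const_lt
    simpa using hpos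
  have he2 : ∀ᶠ ε in nhds (0:ℝ), ε < (b-a)/2 := eventually_lt_nhds (by linarith)
  have he3 : ∀ᶠ ε in nhdsWithin (0:ℝ) (Ioi 0), 0 < ε := eventually_mem_nhdsWithin
  obtain ⟨ε, ⟨h3, h4⟩, h5⟩ :=
    (((he.and he2).filter_mono nhdsWithin_le_nhds).and he3).exists
  exact ⟨ε, h5, by linarith, h3⟩

theorem aux_anti {u' f : ℝ → ℝ} {a b : ℝ} (hf : LocallyIntegrable f volume)
    (hu' : ∀ t, u' t = u' 0 - ∫ s in (0:ℝ)..t, f s)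
    (hpos : ∀ᵐ t ∂(volume.restrict (Icc a b)), 0 ≤ f t) : AntitoneOn u' (Icc a b) := by
  intro x hx y hy hxy
  have : 0 ≤ ∫ s in x..y, f s := by
    apply intervalIntegral.integral_nonneg_of_ae_restrict hxy
    exact ae_restrict_of_ae_restrict_of_subset (Icc_subset_Icc hx.1 hy.2) hpos
  have h2 := intervalIntegral.integral_interval_sub_left (a := 0)
    (aux_ii hf (a := 0) (b := y)) (aux_ii hf (a := 0) (b := x))
  rw [hu' x, hu' y]
  linarith

theorem aux_bound {u u' f : ℝ → ℝ} {a b ε R : ℝ} (hε : 0 < ε) (hab : a + ε < b - ε)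
    (hd : ∀ t, HasDerivAt u (u' t) t)
    (hf : LocallyIntegrable f volume)
    (hu' : ∀ t, u' t = u' 0 - ∫ s in (0:ℝ)..t, f s)
    (hpos : ∀ᵐ t ∂(volume.restrict (Icc a b)), 0 ≤ f t)
    (h0 : ∀ t, 0 ≤ u t) (hR : ∀ t, u t ≤ R) :
    ∫ s in (a+ε)..(b-ε), f s ≤ 2 * R / ε := by
  have hanti := aux_anti hf hu' hpos
  have h2 := intervalIntegral.integral_interval_sub_left (a := 0)
    (aux_ii hf (a := 0) (b := b-ε)) (aux_ii hf (a := 0) (b := a+ε))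
  have hc : Continuous u := continuous_iff_continuousAt.2 fun t => (hd t).continuousAt
  obtain ⟨x, hx, hxe⟩ := exists_hasDerivAt_eq_slope u u' (show a < a + ε by linarith)
    hc.continuousOn (fun t _ => hd t)
  obtain ⟨y, hy, hye⟩ := exists_hasDerivAt_eq_slope u u' (show b - ε < b by linarith)
    hc.continuousOn (fun t _ => hd t)
  have e1 : u' (a+ε) ≤ u' x := hanti ⟨hx.1.le, by linarith [hx.2]⟩ ⟨by linarith, by linarith⟩ hx.2.le
  have e2 : u' y ≤ u' (b-ε) := hanti ⟨by linarith, by linarith⟩ ⟨by linarith [hy.1], hy.2.le⟩ hy.1.le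
  have e3 : u' x ≤ R / ε := by
    rw [hxe, add_sub_cancel_left]
    gcongr
    linarith [h0 a, hR (a+ε)]
  have e4 : -(R/ε) ≤ u' y := by
    rw [hye, sub_sub_cancel, ← neg_div]
    gcongr
    linarith [h0 b, hR (b-ε)]
  have e5 : 2 * R / ε = R/ε + R/ε := by ring
  rw [e5, ← h2]
  linarith [hu' (a+ε), hu' (b-ε)]

theorem aux_low {u u' : ℝ → ℝ} {a b ε R t₀ : ℝ} (hε : 0 < ε) (hab : a + ε < b - ε)
    (hd : ∀ t, HasDerivAt u (u' t) t) (hanti : AntitoneOn u' (Icc a b))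
    (h0 : ∀ t, 0 ≤ u t) (ht : t₀ ∈ Icc a b) (hR : u t₀ = R) :
    ∀ t ∈ Icc (a+ε) (b-ε), ε / (b-a) * R ≤ u t := by
  have hc : Continuous u := continuous_iff_continuousAt.2 fun t => (hd t).continuousAt
  have hder : deriv u = u' := funext fun t => (hd t).deriv
  have hconc : ConcaveOn ℝ (Icc a b) u := by
    apply AntitoneOn.concaveOn_of_deriv (convex_Icc a b) hc.continuousOn
    · exact fun t _ => (hd t).differentiableAt.differentiableWithinAt
    · rw [hder]; exact hanti.mono interior_subset
  have hR0 : 0 ≤ R := hR ▸ h0 t₀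
  have key : ∀ e ∈ Icc a b, ∀ t, ∀ θ, 0 ≤ θ → θ ≤ 1 → ε / (b-a) ≤ θ →
      (1-θ) * e + θ * t₀ = t → ε / (b-a) * R ≤ u t := by
    intro e he t θ h1 h2 h3 h4
    have := hconc.2 he ht (sub_nonneg.2 h2) h1 (by ring)
    simp only [smul_eq_mul] at this
    rw [h4, hR] at this
    have h5 : 0 ≤ (1-θ) * u e := mul_nonneg (sub_nonneg.2 h2) (h0 e)
    have h6 : ε / (b-a) * R ≤ θ * R := by gcongr
    linarith
  intro t htt
  have hba : 0 < b - a := by linarith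
  obtain ⟨ha, hb⟩ := htt
  obtain ⟨ha', hb'⟩ := ht
  rcases le_total t t₀ with hle | hle
  · have hp : 0 < t₀ - a := by linarith
    refine key a ⟨le_rfl, by linarith⟩ t ((t-a)/(t₀-a)) (by apply div_nonneg <;> linarith)
      ((div_le_one hp).2 (by linarith)) ?_ ?_
    · exact div_le_div₀ (by linarith) (by linarith) hp (by linarith)
    · field_simp; ring
  · have hp : 0 < b - t₀ := by linarith
    refine key b ⟨by linarith, le_rfl⟩ t ((b-t)/(b-t₀)) (by apply div_nonneg <;> linarith)
      ((div_le_one hp).2 (by linarith)) ?_ ?_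
    · exact div_le_div₀ (by linarith) (by linarith) hp (by linarith)
    · field_simp; ring

theorem aux_conv {u u' f : ℝ → ℝ} {a b : ℝ}
    (hd : ∀ t, HasDerivAt u (u' t) t)
    (hf : LocallyIntegrable f volume)
    (hu' : ∀ t, u' t = u' 0 - ∫ s in (0:ℝ)..t, f s)
    (hneg : ∀ᵐ t ∂(volume.restrict (Icc a b)), f t ≤ 0) {t : ℝ} (ht : t ∈ Icc a b) :
    u t ≤ max (u a) (u b) := by
  have hc : Continuous u := continuous_iff_continuousAt.2 fun t => (hd t).continuousAt
  have hder : deriv u = u' := funext fun t => (hd t).deriv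
  have h1 : AntitoneOn (fun t => - u' t) (Icc a b) := by
    apply aux_anti hf.neg
    · intro t
      simp only [Pi.neg_apply, intervalIntegral.integral_neg]
      rw [hu' t]; ring
    · filter_upwards [hneg] with t ht
      simpa using ht
  have hconv : ConvexOn ℝ (Icc a b) u := by
    apply MonotoneOn.convexOn_of_deriv (convex_Icc a b) hc.continuousOn
    · exact fun t _ => (hd t).differentiableAt.differentiableWithinAt
    · rw [hder]
      refine MonotoneOn.mono ?_ interior_subset
      intro x hx y hy hxy
      have := h1 hx hy hxy
      simpa using this
  have hle : a ≤ b := ht.1.trans ht.2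
  exact hconv.le_max_of_mem_Icc (left_mem_Icc.2 hle) (right_mem_Icc.2 hle) ht

theorem aux_pos {q g : ℝ → ℝ} {a b : ℝ} (hab : a < b) (hq : LocallyIntegrable q volume)
    (h : PosOn q (Icc a b)) (hgnn : ∀ s, 0 ≤ s → 0 ≤ g s)
    (hgsup : Tendsto (fun s => g s / s) atTop atTop) :
    ∀ᶠ R in atTop, ∀ ν : ℝ, 0 ≤ ν → ∀ u u' : ℝ → ℝ, (∀ t, HasDerivAt u (u' t) t) →
      LocallyIntegrable (fun s => q s * g (u s) + ν * max (q s) 0) volume →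
      (∀ t, u' t = u' 0 - ∫ s in (0:ℝ)..t, (q s * g (u s) + ν * max (q s) 0)) →
      (∀ t, 0 ≤ u t) → (∀ t, u t ≤ R) → ∀ t₀ ∈ Icc a b, u t₀ ≠ R := by
  obtain ⟨ε, hε, hab', hQ⟩ := aux_eps hab hq h
  set Q := ∫ s in (a+ε)..(b-ε), q s with hQdef
  have hba : 0 < b - a := by linarith
  set δ := ε / (b-a) with hδdef
  have hδ : 0 < δ := by positivity
  obtain ⟨S, hS⟩ := eventually_atTop.1 (hgsup.eventually_ge_atTop (3 / (ε * δ * Q)))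
  filter_upwards [eventually_gt_atTop 0, eventually_ge_atTop (S/δ)] with R hR hRS
  intro ν hν u u' hd hf hu' h0 hle t₀ ht₀ hut
  have hpos : ∀ᵐ t ∂(volume.restrict (Icc a b)),
      0 ≤ q t * g (u t) + ν * max (q t) 0 := by
    filter_upwards [h.1] with t ht
    have := hgnn _ (h0 t)
    positivity
  have hlow := aux_low hε hab' hd (aux_anti hf hu' hpos) h0 ht₀ hut
  have hup := aux_bound hε hab' hd hf hu' hpos h0 hle
  have hlow2 : (3 / (ε * δ * Q)) * (δ * R) * Q ≤
      ∫ s in (a+ε)..(b-ε), (q s * g (u s) + ν * max (q s) 0) := by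
    rw [hQdef, ← intervalIntegral.integral_const_mul]
    apply intervalIntegral.integral_mono_ae_restrict hab'.le
    · exact (aux_ii hq).const_mul _
    · exact aux_ii hf
    · have h1 := ae_restrict_of_ae_restrict_of_subset
        (show Icc (a+ε) (b-ε) ⊆ Icc a b from Icc_subset_Icc (by linarith) (by linarith)) h.1
      filter_upwards [h1, ae_restrict_mem measurableSet_Icc] with t ht htm
      rw [← hQdef]
      have hut := hlow t htm
      have hδR : 0 < δ * R := by positivity
      have hupos : 0 < u t := lt_of_lt_of_le hδR hut
      have hSu : S ≤ u t := by
        have : S ≤ R * δ := (div_le_iff₀ hδ).1 hRS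
        linarith
      have h2 := hS _ hSu
      rw [le_div_iff₀ hupos] at h2
      have h3 : (3 / (ε * δ * Q)) * (δ * R) ≤ g (u t) := by
        refine le_trans ?_ h2
        gcongr
      have h4 : 0 ≤ ν * max (q t) 0 := by positivity
      have h5 := mul_le_mul_of_nonneg_left h3 ht
      linarith
  have e : (3 / (ε * δ * Q)) * (δ * R) * Q = 3 * R / ε := by
    field_simp
  rw [e] at hlow2
  have := hlow2.trans hup
  rw [div_le_div_iff_of_pos_right hε] at this
  linarith

theorem aux_loc (σ : ℕ → ℝ) (n : ℕ) (t : ℝ) (h0 : σ 0 ≤ t) (hn : t ≤ σ n) (hpos : 0 < n) :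
    ∃ i < n, t ∈ Icc (σ i) (σ (i+1)) := by
  induction n with
  | zero => omega
  | succ k ih =>
    by_cases hk : t ≤ σ k ∧ 0 < k
    · obtain ⟨i, hi, h⟩ := ih hk.1 hk.2
      exact ⟨i, by omega, h⟩
    · rcases Nat.eq_zero_or_pos k with rfl | hk0
      · exact ⟨0, by omega, h0, hn⟩
      · exact ⟨k, by omega, le_of_lt (by by_contra hh; exact hk ⟨not_lt.1 hh, hk0⟩), hn⟩

/-- large ball a priori bound: since `g(s)/s → +∞`, for every `r > 0`
there are `R > r`, a nonnegative nontrivial `T`-periodic weight `v` and `ν₀ > 0` such that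
(i) no nonnegative `T`-periodic solution of `u'' + q(t)g(u) + ν v(t) = 0`, `ν ∈ [0,ν₀]`,
has sup-norm `R`, and (ii) for `ν = ν₀` there is no `T`-periodic solution with
`0 ≤ u ≤ R`. -/
theorem stmt16 (T : ℝ) (hT : 0 < T) (q : ℝ → ℝ)
    (hqper : Function.Periodic q T)
    (hqloc : MeasureTheory.LocallyIntegrable q MeasureTheory.volume)
    (m : ℕ) (hm : 1 ≤ m) (hqsign : SignCond q T m)
    (g : ℝ → ℝ) (hgC1 : ContDiffOn ℝ 1 g (Set.Ici 0))
    (hg0 : g 0 = 0) (hgpos : ∀ s : ℝ, 0 < s → 0 < g s)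
    (hgsup : Filter.Tendsto (fun s => g s / s) Filter.atTop Filter.atTop) :
    ∀ r : ℝ, 0 < r →
      ∃ R : ℝ, r < R ∧ ∃ v : ℝ → ℝ, ∃ ν₀ : ℝ, 0 < ν₀ ∧
        (∀ t, 0 ≤ v t) ∧ Function.Periodic v T ∧
        MeasureTheory.LocallyIntegrable v MeasureTheory.volume ∧
        ¬ (∀ᵐ t ∂MeasureTheory.volume, v t = 0) ∧
        (∀ ν : ℝ, 0 ≤ ν → ν ≤ ν₀ → ∀ u : ℝ → ℝ,
          IsSol (fun t s => q t * g s + ν * v t) u →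
          (∀ t, 0 ≤ u t) → Function.Periodic u T →
          (⨆ t : ℝ, |u t|) ≠ R) ∧
        ¬ ∃ u : ℝ → ℝ,
            IsSol (fun t s => q t * g s + ν₀ * v t) u ∧
            Function.Periodic u T ∧ ∀ t, u t ∈ Set.Icc (0:ℝ) R := by
  intro r hr
  obtain ⟨σ, hσ0, hσT, hσlt, hσp, hσn⟩ := hqsign
  have hgnn : ∀ s, 0 ≤ s → 0 ≤ g s := by
    intro s hs
    rcases hs.eq_or_lt with h | h
    · rw [← h, hg0]
    · exact (hgpos s h).le
  have hall : ∀ᶠ R in atTop, ∀ i ∈ Finset.range m, ∀ ν : ℝ, 0 ≤ ν → ∀ u u' : ℝ → ℝ,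
      (∀ t, HasDerivAt u (u' t) t) →
      LocallyIntegrable (fun s => q s * g (u s) + ν * max (q s) 0) volume →
      (∀ t, u' t = u' 0 - ∫ s in (0:ℝ)..t, (q s * g (u s) + ν * max (q s) 0)) →
      (∀ t, 0 ≤ u t) → (∀ t, u t ≤ R) → ∀ t₀ ∈ Icc (σ (2*i)) (σ (2*i+1)), u t₀ ≠ R := by
    rw [Filter.eventually_all_finset]
    intro i hi
    have hi' := Finset.mem_range.1 hi
    exact aux_pos (hσlt _ (by omega)) hqloc (hσp i hi') hgnn hgsup
  obtain ⟨R, hR, hrR⟩ := (hall.and (eventually_gt_atTop r)).exists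
  have hRpos : 0 < R := hr.trans hrR
  have hP0 := hσp 0 (by omega)
  obtain ⟨ε, hε, hab', hQ⟩ := aux_eps (hσlt (2*0) (by omega)) hqloc hP0
  set Q := ∫ s in (σ (2*0)+ε)..(σ (2*0+1)-ε), q s with hQdef
  refine ⟨R, hrR, fun t => max (q t) 0, 3 * R / (ε * Q), by positivity,
    fun t => le_max_right _ _, ?_, ?_, ?_, ?_, ?_⟩
  · intro t
    simp only [hqper t]
  · intro x
    obtain ⟨s, hs, hi⟩ := hqloc x
    exact ⟨s, hs, hi.pos_part⟩
  · intro hz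
    apply hP0.2
    filter_upwards [hP0.1, ae_restrict_of_ae hz] with t h1 h2
    rwa [max_eq_left h1] at h2
  · rintro ν hν - u ⟨u', hd, hf, hu'⟩ h0 hper hsup
    have hc : Continuous u := continuous_iff_continuousAt.2 fun t => (hd t).continuousAt
    obtain ⟨t₀, ht₀, hmax⟩ := isCompact_Icc.exists_isMaxOn (nonempty_Icc.2 hT.le) hc.continuousOn
    have hle : ∀ t, u t ≤ u t₀ := by
      intro t
      obtain ⟨y, hy, hye⟩ := hper.exists_mem_Ico₀ hT t
      rw [hye]
      exact hmax (Ico_subset_Icc_self hy)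
    have hRe : u t₀ = R := by
      rw [← hsup]
      apply le_antisymm
      · rw [← abs_of_nonneg (h0 t₀)]
        exact le_ciSup (f := fun t => |u t|)
          ⟨u t₀, by rintro _ ⟨t, rfl⟩; simpa only [abs_of_nonneg (h0 t)] using hle t⟩ t₀
      · apply ciSup_le
        intro t
        rw [abs_of_nonneg (h0 t)]
        exact hle t
    rw [hRe] at hle
    have hno : ∀ i < m, ∀ t ∈ Icc (σ (2*i)) (σ (2*i+1)), u t ≠ R := fun i hi =>
      hR i (Finset.mem_range.2 hi) ν hν u u' hd hf hu' h0 hle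
    obtain ⟨i, hi, hti⟩ := aux_loc σ (2*m) t₀ (by rw [hσ0]; exact ht₀.1)
      (by rw [hσT]; exact ht₀.2) (by omega)
    rcases Nat.even_or_odd' i with ⟨j, rfl | rfl⟩
    · exact hno j (by omega) t₀ hti hRe
    · have hj : j < m := by omega
      have hneg : ∀ᵐ t ∂(volume.restrict (Icc (σ (2*j+1)) (σ (2*j+2)))),
          q t * g (u t) + ν * max (q t) 0 ≤ 0 := by
        filter_upwards [(hσn j hj).1] with t ht
        have hq0 : q t ≤ 0 := by simpa using ht
        rw [max_eq_right hq0, mul_zero, add_zero]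
        exact mul_nonpos_of_nonpos_of_nonneg hq0 (hgnn _ (h0 t))
      have hmx := aux_conv hd hf hu' hneg hti
      rw [hRe] at hmx
      rcases le_max_iff.1 hmx with h | h
      · exact hno j hj _ ⟨(hσlt _ (by omega)).le, le_rfl⟩ (le_antisymm (hle _) h)
      · by_cases hjm : j + 1 < m
        · exact hno (j+1) hjm _ ⟨le_rfl, (hσlt _ (by omega)).le⟩ (le_antisymm (hle _) h)
        · have hjm' : 2*j+2 = 2*m := by omega
          rw [hjm', hσT] at h
          have hT0 : u T = u 0 := by simpa using hper 0
          refine hno 0 (by omega) 0 ⟨hσ0.le, ?_⟩ (le_antisymm (hle _) (hT0 ▸ h))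
          rw [← hσ0]
          exact (hσlt 0 (by omega)).le
  · rintro ⟨u, ⟨u', hd, hf, hu'⟩, -, hu⟩
    have h0 : ∀ t, 0 ≤ u t := fun t => (hu t).1
    have hle : ∀ t, u t ≤ R := fun t => (hu t).2
    have hlo : ∀ᵐ t ∂(volume.restrict (Icc (σ (2*0)) (σ (2*0+1)))),
        3 * R / (ε * Q) * q t ≤ q t * g (u t) + 3 * R / (ε * Q) * max (q t) 0 := by
      filter_upwards [hP0.1] with t ht
      rw [max_eq_left ht]
      have := mul_nonneg ht (hgnn _ (h0 t))
      linarith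
    have hpos : ∀ᵐ t ∂(volume.restrict (Icc (σ (2*0)) (σ (2*0+1)))),
        0 ≤ q t * g (u t) + 3 * R / (ε * Q) * max (q t) 0 := by
      filter_upwards [hP0.1, hlo] with t ht h1
      refine le_trans ?_ h1
      positivity
    have hup := aux_bound hε hab' hd hf hu' hpos h0 hle
    have hlow2 : 3 * R / (ε * Q) * Q ≤ ∫ s in (σ (2*0)+ε)..(σ (2*0+1)-ε),
        (q s * g (u s) + 3 * R / (ε * Q) * max (q s) 0) := by
      have e := intervalIntegral.integral_const_mul (a := σ (2*0)+ε) (b := σ (2*0+1)-ε)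
        (μ := volume) (3 * R / (ε * Q)) q
      rw [← hQdef] at e
      rw [← e]
      apply intervalIntegral.integral_mono_ae_restrict hab'.le
      · exact (aux_ii hqloc).const_mul _
      · exact aux_ii hf
      · exact ae_restrict_of_ae_restrict_of_subset
          (Icc_subset_Icc (by linarith) (by linarith)) hlo
    have e : 3 * R / (ε * Q) * Q = 3 * R / ε := by
      field_simp
    rw [e] at hlow2
    have := hlow2.trans hup
    rw [div_le_div_iff_of_pos_right hε] at this
    linarith
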